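/- Let p ∈ [1, ∞], let F : 𝕋 → ℂ be absolutely continuous with Ḟ ∈ L^p(𝕋), and let f = P[F] be its Poisson integral. Then the angular derivative satisfies f_θ = P[Ḟ] on 𝔻; in particular f_θ belongs to the harmonic Hardy space h^p(𝔻) and ‖f_θ‖_p ≤ ‖Ḟ‖_{L^p(𝕋)}. -/

import Mathlib

open MeasureTheory Complex Metric Set Filter
open scoped Real Topology ENNReal

noncomputable section

/-- The Poisson kernel `P(z) = (1-|z|^2)/|1-z|^2`. -/
def poissonKer (z : ℂ) : ℝ := (1 - ‖z‖ ^ 2) / ‖1 - z‖ ^ 2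

/-- The Poisson integral of a boundary function `F` defined on the unit circle. -/
def poissonInt (F : ℂ → ℂ) (z : ℂ) : ℂ :=
  (1 / (2 * π)) * ∫ t in (0:ℝ)..(2 * π),
    (poissonKer (z * Complex.exp (-(t : ℂ) * Complex.I)) : ℂ) *
      F (Complex.exp ((t : ℂ) * Complex.I))

/-- The Poisson integral of a (2π-periodic) function of the angular variable. -/
def poissonIntR (φ : ℝ → ℂ) (z : ℂ) : ℂ :=
  (1 / (2 * π)) * ∫ t in (0:ℝ)..(2 * π),
    (poissonKer (z * Complex.exp (-(t : ℂ) * Complex.I)) : ℂ) * φ t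

/-- The conjugate Poisson kernel `P̃(z) = Im((1+z)/(1-z))`. -/
def conjPoissonKer (z : ℂ) : ℝ := ((1 + z) / (1 - z)).im

/-- The conjugate Poisson integral of a function of the angular variable. -/
def conjPoissonIntR (φ : ℝ → ℂ) (z : ℂ) : ℂ :=
  (1 / (2 * π)) * ∫ t in (0:ℝ)..(2 * π),
    (conjPoissonKer (z * Complex.exp (-(t : ℂ) * Complex.I)) : ℂ) * φ t

/-- Wirtinger derivative `f_z = (1/2)(∂ₓ - i ∂_y) f`. -/
def wdz (f : ℂ → ℂ) (z : ℂ) : ℂ :=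
  (1 / 2) * (fderiv ℝ f z 1 - Complex.I * fderiv ℝ f z Complex.I)

/-- Wirtinger derivative `f_z̄ = (1/2)(∂ₓ + i ∂_y) f`. -/
def wdzb (f : ℂ → ℂ) (z : ℂ) : ℂ :=
  (1 / 2) * (fderiv ℝ f z 1 + Complex.I * fderiv ℝ f z Complex.I)

/-- The angular derivative `f_θ(z) = i (z f_z(z) - z̄ f_z̄(z))`. -/
def fTheta (f : ℂ → ℂ) (z : ℂ) : ℂ :=
  Complex.I * (z * wdz f z - (starRingEnd ℂ) z * wdzb f z)

/-- The radial derivative multiplied by `r`: `r f_r(z) = z f_z(z) + z̄ f_z̄(z)`. -/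
def rFr (f : ℂ → ℂ) (z : ℂ) : ℂ :=
  z * wdz f z + (starRingEnd ℂ) z * wdzb f z

/-- `F : 𝕋 → ℂ` is absolutely continuous with angular derivative `Ḟ = Fd`,
i.e. `t ↦ F(e^{it})` is an indefinite integral of the (locally integrable,
2π-periodic) function `Fd`. -/
def IsACDeriv (F : ℂ → ℂ) (Fd : ℝ → ℂ) : Prop :=
  (∀ a b : ℝ, IntervalIntegrable Fd MeasureTheory.volume a b) ∧
  Function.Periodic Fd (2 * π) ∧
  ∀ t : ℝ, F (Complex.exp ((t : ℂ) * Complex.I)) = F 1 + ∫ s in (0:ℝ)..t, Fd s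

/-- membership in `L^p(𝕋)`, identifying `𝕋` with `[0, 2π)`. -/
def MemLpT (p : ℝ≥0∞) (φ : ℝ → ℂ) : Prop :=
  MeasureTheory.MemLp φ p (MeasureTheory.volume.restrict (Ioc (0:ℝ) (2 * π)))

/-- The integral mean `M_p(r, g)`. -/
def Mp (p : ℝ) (g : ℂ → ℂ) (r : ℝ) : ℝ :=
  ((1 / (2 * π)) * ∫ θ in (0:ℝ)..(2 * π),
      ‖g ((r : ℂ) * Complex.exp ((θ : ℂ) * Complex.I))‖ ^ p) ^ (1 / p)

/-- The `L^p(𝕋)` norm `((1/2π) ∫ |φ|^p)^{1/p}`. -/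
def lpNormT (p : ℝ) (φ : ℝ → ℂ) : ℝ :=
  ((1 / (2 * π)) * ∫ t in (0:ℝ)..(2 * π), ‖φ t‖ ^ p) ^ (1 / p)

/-- Membership in the analytic Hardy space `H^p(𝔻)` for `p ∈ [1, ∞)`. -/
def MemHp (p : ℝ) (g : ℂ → ℂ) : Prop :=
  DifferentiableOn ℂ g (ball (0:ℂ) 1) ∧ ∃ M : ℝ, ∀ r ∈ Ioo (0:ℝ) 1, Mp p g r ≤ M

/-- Membership in `H^∞(𝔻)`: bounded analytic functions on the unit disk. -/
def MemHinf (g : ℂ → ℂ) : Prop :=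
  DifferentiableOn ℂ g (ball (0:ℂ) 1) ∧ ∃ M : ℝ, ∀ z ∈ ball (0:ℂ) 1, ‖g z‖ ≤ M

/-- Harmonicity on the unit disk: `f` is C² with vanishing Laplacian. -/
def HarmonicOnD (f : ℂ → ℂ) : Prop :=
  ContDiffOn ℝ 2 f (ball (0:ℂ) 1) ∧
  ∀ z ∈ ball (0:ℂ) 1,
    fderiv ℝ (fun w => fderiv ℝ f w 1) z 1
      + fderiv ℝ (fun w => fderiv ℝ f w Complex.I) z Complex.I = 0

/-- Membership in the harmonic Hardy space `h^p(𝔻)` for `p ∈ [1, ∞)`. -/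
def Memhp (p : ℝ) (g : ℂ → ℂ) : Prop :=
  HarmonicOnD g ∧ ∃ M : ℝ, ∀ r ∈ Ioo (0:ℝ) 1, Mp p g r ≤ M

/-- Membership in `h^∞(𝔻)`: bounded harmonic functions on the unit disk. -/
def Memhinf (g : ℂ → ℂ) : Prop :=
  HarmonicOnD g ∧ ∃ M : ℝ, ∀ z ∈ ball (0:ℂ) 1, ‖g z‖ ≤ M

/-- `L` is the value of the principal-value Hilbert transform
`(1/2π) p.v. ∫ φ(t)/tan((θ-t)/2) dt` of (the 2π-periodic) `φ` at `θ`. -/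
def IsPVHilbert (φ : ℝ → ℂ) (θ : ℝ) (L : ℂ) : Prop :=
  Filter.Tendsto
    (fun ε : ℝ => (1 / (2 * π)) *
      ∫ t in Ioo (θ - π) (θ + π) \ Ioo (θ - ε) (θ + ε),
        φ t / (Real.tan ((θ - t) / 2) : ℂ))
    (nhdsWithin 0 (Ioi 0)) (nhds L)

/-!
`P[F]` is half the sum of `H[F]` and the conjugate of `H[F̄]`, where `H` is the Herglotz–Riesz
transform, holomorphic on the disk. Since `f_θ` is the derivative of `f` in the direction `i z`, it
is enough that `i z H[F]' = H[Ḟ]`. On the boundary, `∂/∂t` acts on the Herglotz–Riesz kernel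
`(e^{it} + z) / (e^{it} - z)` as `-i z ∂/∂z`, so this identity is one integration by parts, whose
boundary terms cancel by periodicity. The norm bound is Schur's test: the kernel
`P(r e^{i(θ - t)}) / 2π` is symmetric in `θ` and `t` and has total mass one.
-/

section AbsolutelyContinuous

variable {E : Type*} [NormedAddCommGroup E] [NormedSpace ℝ E] {a b c : ℝ}

theorem dist_intervalIntegral_le_dist_intervalIntegral_norm {g : ℝ → E} {x y : ℝ}
    (hx : IntervalIntegrable g volume c x) (hy : IntervalIntegrable g volume c y) :
    dist (∫ v in c..x, g v) (∫ v in c..y, g v) ≤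
      dist (∫ v in c..x, ‖g v‖) (∫ v in c..y, ‖g v‖) := by
  rw [dist_eq_norm, Real.dist_eq, intervalIntegral.integral_interval_sub_left hx hy,
    intervalIntegral.integral_interval_sub_left hx.norm hy.norm]
  exact intervalIntegral.norm_integral_le_abs_integral_norm

theorem absolutelyContinuousOnInterval_intervalIntegral {g : ℝ → E}
    (hg : IntervalIntegrable g volume a b) (hc : c ∈ uIcc a b) :
    AbsolutelyContinuousOnInterval (fun x ↦ ∫ v in c..x, g v) a b := by
  have hint : ∀ x ∈ uIcc a b, IntervalIntegrable g volume c x := fun x hx ↦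
    hg.mono_set (uIcc_subset_uIcc hc hx)
  have hnorm := hg.norm.absolutelyContinuousOnInterval_intervalIntegral hc
  rw [absolutelyContinuousOnInterval_iff] at hnorm ⊢
  intro ε hε
  obtain ⟨δ, hδ, hδε⟩ := hnorm ε hε
  refine ⟨δ, hδ, fun I hI hlen ↦ (Finset.sum_le_sum fun i hi ↦ ?_).trans_lt (hδε I hI hlen)⟩
  exact dist_intervalIntegral_le_dist_intervalIntegral_norm
    (hint _ (hI.1 i hi).1) (hint _ (hI.1 i hi).2)

variable [CompleteSpace E]

theorem intervalIntegral_eq_sub_of_absolutelyContinuousOnInterval {f f' : ℝ → E}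
    (hf : AbsolutelyContinuousOnInterval f a b) (hint : IntervalIntegrable f' volume a b)
    (hderiv : ∀ᵐ x, x ∈ uIcc a b → HasDerivAt f (f' x) x) :
    ∫ x in a..b, f' x = f b - f a := by
  have hac : AbsolutelyContinuousOnInterval (fun x ↦ f x - ∫ v in a..x, f' v) a b :=
    hf.fun_sub (absolutelyContinuousOnInterval_intervalIntegral hint left_mem_uIcc)
  have hzero : ∀ᵐ x, x ∈ uIcc a b → HasDerivAt (fun x ↦ f x - ∫ v in a..x, f' v) 0 x := by
    filter_upwards [hderiv, hint.ae_hasDerivAt_integral] with x hfx hix hx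
    simpa only [sub_self] using (hfx hx).fun_sub (hix hx a left_mem_uIcc)
  obtain ⟨C, hC⟩ := hac.const_of_ae_hasDerivAt_zero hzero
  have hab : f a = f b - ∫ v in a..b, f' v := by
    simpa using (hC a left_mem_uIcc).trans (hC b right_mem_uIcc).symm
  rw [hab, sub_sub_cancel]

theorem intervalIntegral_smul_deriv_eq_deriv_smul_of_absolutelyContinuousOnInterval
    {𝕜 : Type*} [NontriviallyNormedField 𝕜] [NormedAlgebra ℝ 𝕜] [NormedSpace 𝕜 E]
    [IsScalarTower ℝ 𝕜 E] {u u' : ℝ → 𝕜} {v v' : ℝ → E}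
    (hu : AbsolutelyContinuousOnInterval u a b) (hv : AbsolutelyContinuousOnInterval v a b)
    (hu'int : IntervalIntegrable u' volume a b) (hv'int : IntervalIntegrable v' volume a b)
    (hu' : ∀ᵐ x, x ∈ uIcc a b → HasDerivAt u (u' x) x)
    (hv' : ∀ᵐ x, x ∈ uIcc a b → HasDerivAt v (v' x) x) :
    ∫ x in a..b, u x • v' x = u b • v b - u a • v a - ∫ x in a..b, u' x • v x := by
  have hleft : IntervalIntegrable (fun x ↦ u x • v' x) volume a b :=
    hv'int.continuousOn_smul hu.continuousOn
  have hright : IntervalIntegrable (fun x ↦ u' x • v x) volume a b :=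
    hu'int.smul_continuousOn hv.continuousOn
  have hderiv : ∀ᵐ x, x ∈ uIcc a b →
      HasDerivAt (fun x ↦ u x • v x) (u x • v' x + u' x • v x) x := by
    filter_upwards [hu', hv'] with x hux hvx hx using (hux hx).fun_smul (hvx hx)
  rw [eq_sub_iff_add_eq, ← intervalIntegral.integral_add hleft hright]
  exact intervalIntegral_eq_sub_of_absolutelyContinuousOnInterval (hu.fun_smul hv)
    (hleft.add hright) hderiv

end AbsolutelyContinuous

theorem circleMap_zero_one (t : ℝ) : circleMap 0 1 t = exp (t * I) := by
  rw [circleMap_zero, ofReal_one, one_mul]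

theorem circleMap_zero_mem_ball_of_abs_lt_one {r : ℝ} (hr : |r| < 1) (θ : ℝ) :
    circleMap 0 r θ ∈ ball 0 1 := by
  rwa [mem_ball_zero_iff, norm_circleMap_zero]

namespace IsACDeriv

variable {F : ℂ → ℂ} {Fd : ℝ → ℂ}

theorem comp_circleMap_eq (hF : IsACDeriv F Fd) :
    F ∘ circleMap 0 1 = fun t ↦ F 1 + ∫ s in (0 : ℝ)..t, Fd s := by
  ext t
  rw [Function.comp_apply, circleMap_zero_one, hF.2.2]

theorem absolutelyContinuousOnInterval (hF : IsACDeriv F Fd) {b : ℝ} :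
    AbsolutelyContinuousOnInterval (F ∘ circleMap 0 1) 0 b := by
  rw [hF.comp_circleMap_eq]
  exact contDiffOn_const.absolutelyContinuousOnInterval.fun_add
    (absolutelyContinuousOnInterval_intervalIntegral (hF.1 0 b) left_mem_uIcc)

theorem ae_hasDerivAt (hF : IsACDeriv F Fd) {b : ℝ} :
    ∀ᵐ t, t ∈ uIcc 0 b → HasDerivAt (F ∘ circleMap 0 1) (Fd t) t := by
  rw [hF.comp_circleMap_eq]
  filter_upwards [(hF.1 0 b).ae_hasDerivAt_integral] with t ht hmem
  exact (ht hmem 0 left_mem_uIcc).const_add (F 1)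

theorem circleIntegrable (hF : IsACDeriv F Fd) : CircleIntegrable F 0 1 :=
  hF.absolutelyContinuousOnInterval.continuousOn.intervalIntegrable

theorem conj (hF : IsACDeriv F Fd) :
    IsACDeriv (fun ζ ↦ starRingEnd ℂ (F ζ)) (fun t ↦ starRingEnd ℂ (Fd t)) := by
  obtain ⟨hint, hper, heq⟩ := hF
  refine ⟨fun a b ↦ ?_, fun t ↦ congrArg _ (hper t), fun t ↦ ?_⟩
  · exact ⟨conjCLE.toContinuousLinearMap.integrable_comp (hint a b).1,
      conjCLE.toContinuousLinearMap.integrable_comp (hint a b).2⟩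
  · simp only [heq, map_add, intervalIntegral.intervalIntegral_conj]

theorem exists_eq_comp_circleMap (hF : IsACDeriv F Fd) :
    ∃ G : ℂ → ℂ, Fd = G ∘ circleMap 0 1 := by
  refine ⟨Fd ∘ arg, funext fun t ↦ ?_⟩
  rw [Function.comp_apply, Function.comp_apply, circleMap_zero_one, arg_exp_mul_I, toIocMod,
    hF.2.1.sub_zsmul_eq]

end IsACDeriv

/-- The Herglotz–Riesz transform `(1/2π) ∫₀^{2π} (e^{it} + z) / (e^{it} - z) F(e^{it}) dt`: the
holomorphic completion of the Poisson integral. -/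
def herglotzInt (F : ℂ → ℂ) (z : ℂ) : ℂ :=
  Real.circleAverage (fun ζ ↦ herglotzRieszKernel 0 z ζ • F ζ) 0 1

section Herglotz

variable {F : ℂ → ℂ} {z : ℂ}

theorem analyticOnNhd_herglotzInt (hF : CircleIntegrable F 0 1) :
    AnalyticOnNhd ℂ (herglotzInt F) (ball 0 1) :=
  analyticOnNhd_circleAverage_herglotzRieszKernel_smul hF

theorem hasDerivAt_herglotzInt (hF : CircleIntegrable F 0 1) (hz : z ∈ ball 0 1) :
    HasDerivAt (herglotzInt F) (Real.circleAverage (fun ζ ↦ (2 * ζ / (ζ - z) ^ 2) • F ζ) 0 1) z :=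
  hasDerivAt_circleAverage_herglotzRieszKernel_smul hF hz

theorem poissonKer_mul_exp_neg (z : ℂ) (t : ℝ) :
    poissonKer (z * exp (-(t : ℂ) * I)) = poissonKernel 0 z (circleMap 0 1 t) := by
  have hnorm : ‖exp (-(t : ℂ) * I)‖ = 1 := by
    rw [← ofReal_neg, norm_exp_ofReal_mul_I]
  have hsub : 1 - z * exp (-(t : ℂ) * I) = exp (-(t : ℂ) * I) * (circleMap 0 1 t - z) := by
    rw [circleMap_zero_one, mul_sub, ← Complex.exp_add, neg_mul, neg_add_cancel, Complex.exp_zero,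
      mul_comm z]
  rw [poissonKer, poissonKernel_def, hsub, norm_mul, norm_mul, hnorm]
  simp only [sub_zero, mul_one, one_mul, norm_circleMap_zero, abs_one, one_pow]

theorem poissonInt_eq_circleAverage (F : ℂ → ℂ) (z : ℂ) :
    poissonInt F z = Real.circleAverage (fun ζ ↦ poissonKernel 0 z ζ • F ζ) 0 1 := by
  simp only [poissonInt, Real.circleAverage_def, poissonKer_mul_exp_neg, circleMap_zero_one,
    real_smul]
  push_cast
  rw [one_div]

theorem poissonIntR_comp_circleMap (G : ℂ → ℂ) (z : ℂ) :
    poissonIntR (G ∘ circleMap 0 1) z = poissonInt G z := by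
  simp only [poissonIntR, poissonInt, Function.comp_apply, circleMap_zero_one]

theorem circleIntegrable_conj (hF : CircleIntegrable F 0 1) :
    CircleIntegrable (fun ζ ↦ starRingEnd ℂ (F ζ)) 0 1 :=
  ⟨conjCLE.toContinuousLinearMap.integrable_comp hF.1,
    conjCLE.toContinuousLinearMap.integrable_comp hF.2⟩

theorem conj_herglotzInt_conj (F : ℂ → ℂ) (z : ℂ) :
    starRingEnd ℂ (herglotzInt (fun ζ ↦ starRingEnd ℂ (F ζ)) z) =
      Real.circleAverage (fun ζ ↦ starRingEnd ℂ (herglotzRieszKernel 0 z ζ) * F ζ) 0 1 := by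
  simp only [herglotzInt, Real.circleAverage_def, smul_eq_mul, real_smul, map_mul, conj_ofReal,
    ← intervalIntegral.intervalIntegral_conj, conj_conj]

theorem poissonInt_eq_herglotzInt_add_conj (hF : CircleIntegrable F 0 1) (hz : z ∈ ball 0 1) :
    poissonInt F z = (1 / 2 : ℝ) •
      (herglotzInt F z + starRingEnd ℂ (herglotzInt (fun ζ ↦ starRingEnd ℂ (F ζ)) z)) := by
  have hK := continuousOn_herglotzRieszKernel_sphere hz
  have hH : CircleIntegrable (fun ζ ↦ herglotzRieszKernel 0 z ζ • F ζ) 0 1 :=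
    hF.continuousOn_smul hK
  have hH' : CircleIntegrable (fun ζ ↦ starRingEnd ℂ (herglotzRieszKernel 0 z ζ) * F ζ) 0 1 :=
    hF.continuousOn_smul (continuous_conj.comp_continuousOn hK)
  rw [poissonInt_eq_circleAverage, conj_herglotzInt_conj, herglotzInt,
    ← Real.circleAverage_fun_add hH hH', ← Real.circleAverage_fun_smul]
  congr 1 with ζ
  rw [poissonKernel_eq_re_herglotzRieszKernel, Function.comp_apply, smul_eq_mul, ← add_mul,
    add_conj, real_smul, real_smul]
  push_cast
  ring

theorem circleMap_sub_ne_zero (hz : z ∈ ball 0 1) (t : ℝ) : circleMap 0 1 t - z ≠ 0 :=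
  sub_ne_zero.2 (circleMap_ne_mem_ball hz t)

theorem hasDerivAt_herglotzRieszKernel_circleMap (hz : z ∈ ball 0 1) (t : ℝ) :
    HasDerivAt (fun t ↦ herglotzRieszKernel 0 z (circleMap 0 1 t))
      (-(I * z * (2 * circleMap 0 1 t / (circleMap 0 1 t - z) ^ 2))) t := by
  have hne := circleMap_sub_ne_zero hz t
  simp only [herglotzRieszKernel_def, sub_zero]
  have hζ := hasDerivAt_circleMap 0 1 t
  refine ((hζ.add_const z).fun_div (hζ.sub_const z) hne).congr_deriv ?_
  field_simp
  ring

theorem contDiff_herglotzRieszKernel_circleMap (hz : z ∈ ball 0 1) {n : WithTop ℕ∞} :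
    ContDiff ℝ n fun t ↦ herglotzRieszKernel 0 z (circleMap 0 1 t) := by
  simp only [herglotzRieszKernel_def, sub_zero, div_eq_mul_inv]
  exact ((contDiff_circleMap 0 1).add contDiff_const).mul
    (((contDiff_circleMap 0 1).sub contDiff_const).inv (circleMap_sub_ne_zero hz))

theorem continuous_deriv_herglotzRieszKernel_circleMap (hz : z ∈ ball 0 1) :
    Continuous fun t ↦ -(I * z * (2 * circleMap 0 1 t / (circleMap 0 1 t - z) ^ 2)) := by
  have hne (t : ℝ) : (circleMap 0 1 t - z) ^ 2 ≠ 0 := pow_ne_zero 2 (circleMap_sub_ne_zero hz t)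
  fun_prop (disch := exact hne _)

theorem I_mul_deriv_herglotzInt {G : ℂ → ℂ} (hF : IsACDeriv F (G ∘ circleMap 0 1))
    (hz : z ∈ ball 0 1) :
    I * z * deriv (herglotzInt F) z = herglotzInt G z := by
  have hparts := intervalIntegral_smul_deriv_eq_deriv_smul_of_absolutelyContinuousOnInterval
    (contDiff_herglotzRieszKernel_circleMap hz).contDiffOn.absolutelyContinuousOnInterval
    hF.absolutelyContinuousOnInterval
    ((continuous_deriv_herglotzRieszKernel_circleMap hz).intervalIntegrable 0 (2 * π))
    (hF.1 0 (2 * π)) (.of_forall fun t _ ↦ hasDerivAt_herglotzRieszKernel_circleMap hz t)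
    hF.ae_hasDerivAt
  have hperiod : circleMap 0 1 (2 * π) = circleMap 0 1 0 := (periodic_circleMap 0 1).eq
  simp only [Function.comp_apply, hperiod, sub_self, zero_sub] at hparts
  simp only [(hasDerivAt_herglotzInt hF.circleIntegrable hz).deriv, herglotzInt,
    Real.circleAverage_def]
  rw [hparts, ← intervalIntegral.integral_neg, mul_smul_comm, ← intervalIntegral.integral_const_mul]
  simp only [smul_eq_mul, neg_mul, neg_neg, mul_assoc]

end Herglotz

theorem fTheta_eq_fderiv (f : ℂ → ℂ) (z : ℂ) : fTheta f z = fderiv ℝ f z (I * z) := by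
  have hIz : I * z = (-z.im) • (1 : ℂ) + z.re • I := by
    apply Complex.ext <;> simp
  have hz : z = z.re + z.im * I := (re_add_im z).symm
  have hconj : starRingEnd ℂ z = z.re - z.im * I := by
    apply Complex.ext <;> simp
  rw [hIz, map_add, map_smul, map_smul, fTheta, wdz, wdzb, hconj]
  nth_rw 1 [hz]
  simp only [real_smul, ofReal_neg]
  linear_combination (fderiv ℝ f z 1 * z.im - z.re * fderiv ℝ f z I) * I_sq

section AngularDerivative

variable {F G : ℂ → ℂ} {z : ℂ}

theorem hasFDerivAt_poissonInt (hF : CircleIntegrable F 0 1) (hz : z ∈ ball 0 1) :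
    HasFDerivAt (poissonInt F) ((1 / 2 : ℝ) • (deriv (herglotzInt F) z • (1 : ℂ →L[ℝ] ℂ) +
      conjCLE.toContinuousLinearMap ∘L
        (deriv (herglotzInt fun ζ ↦ starRingEnd ℂ (F ζ)) z • (1 : ℂ →L[ℝ] ℂ)))) z := by
  have hdiff {H : ℂ → ℂ} (hH : CircleIntegrable H 0 1) :
      HasFDerivAt (herglotzInt H) (deriv (herglotzInt H) z • (1 : ℂ →L[ℝ] ℂ)) z :=
    (hasDerivAt_herglotzInt hH hz).differentiableAt.hasDerivAt.complexToReal_fderiv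
  have hsum := ((hdiff hF).fun_add
    (conjCLE.hasFDerivAt.comp z (hdiff (circleIntegrable_conj hF)))).const_smul (1 / 2 : ℝ)
  refine hsum.congr_of_eventuallyEq ?_
  filter_upwards [isOpen_ball.mem_nhds hz] with w hw
    using poissonInt_eq_herglotzInt_add_conj hF hw

theorem fTheta_poissonInt (hF : IsACDeriv F (G ∘ circleMap 0 1)) (hz : z ∈ ball 0 1) :
    fTheta (poissonInt F) z = poissonInt G z := by
  have hG : CircleIntegrable G 0 1 := hF.1 0 (2 * π)
  have hconj : IsACDeriv (fun ζ ↦ starRingEnd ℂ (F ζ))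
      ((fun ζ ↦ starRingEnd ℂ (G ζ)) ∘ circleMap 0 1) := hF.conj
  rw [fTheta_eq_fderiv, (hasFDerivAt_poissonInt hF.circleIntegrable hz).fderiv,
    poissonInt_eq_herglotzInt_add_conj hG hz, ← I_mul_deriv_herglotzInt hF hz,
    ← I_mul_deriv_herglotzInt hconj hz]
  simp only [smul_apply, add_apply, smul_eq_mul, ContinuousLinearMap.comp_apply,
    ContinuousLinearEquiv.coe_coe, conjCLE_apply, one_apply_eq_self, mul_comm (I * z)]

end AngularDerivative

section Harmonic

open InnerProductSpace

theorem harmonicOnNhd_of_eqOn {E V : Type*} [NormedAddCommGroup E] [InnerProductSpace ℝ E]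
    [FiniteDimensional ℝ E] [NormedAddCommGroup V] [NormedSpace ℝ V] {f g : E → V} {s : Set E}
    (hs : IsOpen s) (hg : HarmonicOnNhd g s) (hfg : EqOn f g s) : HarmonicOnNhd f s :=
  fun z hz ↦ (harmonicAt_congr_nhds (hfg.eventuallyEq_of_mem (hs.mem_nhds hz))).2 (hg z hz)

theorem harmonicOnD_of_harmonicOnNhd {f : ℂ → ℂ} (hf : HarmonicOnNhd f (ball 0 1)) :
    HarmonicOnD f := by
  have hderiv : DifferentiableOn ℝ (fderiv ℝ f) (ball 0 1) :=
    (hf.contDiffOn.fderiv_of_isOpen isOpen_ball le_rfl).differentiableOn_one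
  refine ⟨hf.contDiffOn, fun z hz ↦ ?_⟩
  have hlap := (hf z hz).2.eq_of_nhds
  have hfz := (hderiv z hz).differentiableAt (isOpen_ball.mem_nhds hz)
  rw [laplacian_eq_iteratedFDeriv_complexPlane] at hlap
  simpa [iteratedFDeriv_two_apply, fderiv_clm_apply hfz (differentiableAt_const _)] using hlap

theorem harmonicOnNhd_poissonInt {F : ℂ → ℂ} (hF : CircleIntegrable F 0 1) :
    HarmonicOnNhd (poissonInt F) (ball 0 1) := by
  have hharm {H : ℂ → ℂ} (hH : CircleIntegrable H 0 1) :
      HarmonicOnNhd (herglotzInt H) (ball 0 1) := fun z hz ↦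
    (analyticOnNhd_herglotzInt hH z hz).harmonicAt
  have hconj := (hharm (circleIntegrable_conj hF)).comp_CLM conjCLE.toContinuousLinearMap
  exact harmonicOnNhd_of_eqOn isOpen_ball (((hharm hF).add hconj).const_smul (c := (1 / 2 : ℝ)))
    fun z hz ↦ poissonInt_eq_herglotzInt_add_conj hF hz

end Harmonic

section SchurTest

variable {X Y E E' : Type*} [MeasurableSpace X] [MeasurableSpace Y] {μ : Measure X} {ν : Measure Y}
  [NormedAddCommGroup E] [NormedAddCommGroup E'] {p : ℝ≥0∞}

theorem lintegral_mul_enorm_le_eLpNorm_withDensity {k : Y → ℝ≥0∞} {f : Y → E} (hp : 1 ≤ p)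
    (hk : AEMeasurable k ν) (hmass : ∫⁻ y, k y ∂ν ≤ 1) (hf : AEStronglyMeasurable f ν) :
    ∫⁻ y, k y * ‖f y‖ₑ ∂ν ≤ eLpNorm f p (ν.withDensity k) := by
  have huniv : ν.withDensity k univ ≤ 1 := by
    rwa [withDensity_apply _ .univ, Measure.restrict_univ]
  have hexp : 0 ≤ 1 / ENNReal.toReal 1 - 1 / p.toReal := by
    rcases eq_or_ne p ⊤ with rfl | hpt
    · simp
    · simpa using inv_le_one_of_one_le₀ (ENNReal.toReal_mono hpt hp)
  calc ∫⁻ y, k y * ‖f y‖ₑ ∂ν = eLpNorm f 1 (ν.withDensity k) := by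
        rw [eLpNorm_one_eq_lintegral_enorm, lintegral_withDensity_eq_lintegral_mul₀ hk hf.enorm]
        rfl
    _ ≤ eLpNorm f p (ν.withDensity k) *
          ν.withDensity k univ ^ (1 / ENNReal.toReal 1 - 1 / p.toReal) :=
        eLpNorm_le_eLpNorm_mul_rpow_measure_univ hp
          (hf.mono_ac (withDensity_absolutelyContinuous ν k))
    _ ≤ eLpNorm f p (ν.withDensity k) := mul_le_of_le_one_right' (ENNReal.rpow_le_one huniv hexp)

theorem lintegral_mul_enorm_le_eLpNorm_top {k : Y → ℝ≥0∞} {f : Y → E}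
    (hk : AEMeasurable k ν) (hmass : ∫⁻ y, k y ∂ν ≤ 1) (hf : AEStronglyMeasurable f ν) :
    ∫⁻ y, k y * ‖f y‖ₑ ∂ν ≤ eLpNorm f ⊤ ν := by
  refine (lintegral_mul_enorm_le_eLpNorm_withDensity le_top hk hmass hf).trans ?_
  simpa only [eLpNorm_exponent_top] using
    eLpNormEssSup_mono_measure f (withDensity_absolutelyContinuous ν k)

theorem lintegral_lintegral_mul_le_of_lintegral_le_one [SFinite μ] [SFinite ν]
    {K : X → Y → ℝ≥0∞} {h : Y → ℝ≥0∞} (hK : Measurable (Function.uncurry K))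
    (hcol : ∀ y, ∫⁻ x, K x y ∂μ ≤ 1) (hh : AEMeasurable h ν) :
    ∫⁻ x, ∫⁻ y, K x y * h y ∂ν ∂μ ≤ ∫⁻ y, h y ∂ν := by
  rw [lintegral_lintegral_swap (hK.aemeasurable.mul hh.comp_snd)]
  refine lintegral_mono fun y ↦ ?_
  rw [lintegral_mul_const _ hK.of_uncurry_right]
  exact mul_le_of_le_one_left' (hcol y)

theorem eLpNorm_le_eLpNorm_of_enorm_le_lintegral_kernel [SFinite μ] [SFinite ν]
    {K : X → Y → ℝ≥0∞} {f : Y → E} {g : X → E'} (hp : 1 ≤ p)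
    (hK : Measurable (Function.uncurry K)) (hrow : ∀ x, ∫⁻ y, K x y ∂ν ≤ 1)
    (hcol : ∀ y, ∫⁻ x, K x y ∂μ ≤ 1) (hf : AEStronglyMeasurable f ν)
    (hg : ∀ x, ‖g x‖ₑ ≤ ∫⁻ y, K x y * ‖f y‖ₑ ∂ν) :
    eLpNorm g p μ ≤ eLpNorm f p ν := by
  have hKx (x : X) : AEMeasurable (K x) ν := hK.of_uncurry_left.aemeasurable
  rcases eq_or_ne p ⊤ with rfl | hpt
  · rw [eLpNorm_exponent_top]
    exact eLpNormEssSup_le_of_ae_enorm_bound <| .of_forall fun x ↦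
      (hg x).trans (lintegral_mul_enorm_le_eLpNorm_top (hKx x) (hrow x) hf)
  have hp0 : p ≠ 0 := (one_pos.trans_le hp).ne'
  have hjensen (x : X) : ‖g x‖ₑ ^ p.toReal ≤ ∫⁻ y, K x y * ‖f y‖ₑ ^ p.toReal ∂ν := by
    have hgx := (hg x).trans (lintegral_mul_enorm_le_eLpNorm_withDensity hp (hKx x) (hrow x) hf)
    rw [eLpNorm_eq_lintegral_rpow_enorm_toReal hp0 hpt, lintegral_withDensity_eq_lintegral_mul₀
      (hKx x) (hf.enorm.pow_const _)] at hgx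
    rwa [one_div, ENNReal.le_rpow_inv_iff (ENNReal.toReal_pos hp0 hpt)] at hgx
  rw [eLpNorm_eq_lintegral_rpow_enorm_toReal hp0 hpt,
    eLpNorm_eq_lintegral_rpow_enorm_toReal hp0 hpt]
  gcongr
  exact (lintegral_mono hjensen).trans
    (lintegral_lintegral_mul_le_of_lintegral_le_one hK hcol (hf.enorm.pow_const _))

end SchurTest

/-- The density, with respect to `dt` on `[0, 2π]`, of the Poisson probability measure of `z` on
the circle; extended-nonnegative valued so that it can serve as a kernel in the Schur test. -/
def poissonDensity (z : ℂ) (t : ℝ) : ℝ≥0∞ :=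
  ENNReal.ofReal ((2 * π)⁻¹ * poissonKernel 0 z (circleMap 0 1 t))

section PoissonDensity

variable {G : ℂ → ℂ} {z : ℂ} {p : ℝ≥0∞}

theorem measurable_poissonDensity {X : Type*} [MeasurableSpace X] {w : X → ℂ} {t : X → ℝ}
    (hw : Measurable w) (ht : Measurable t) : Measurable fun x ↦ poissonDensity (w x) (t x) := by
  simp only [poissonDensity, poissonKernel_def]
  fun_prop

theorem norm_sub_smul_comm_of_norm_eq {E : Type*} [NormedAddCommGroup E] [InnerProductSpace ℝ E]
    {x y : E} (hxy : ‖x‖ = ‖y‖) (r : ℝ) : ‖x - r • y‖ = ‖y - r • x‖ := by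
  rw [← sq_eq_sq₀ (norm_nonneg _) (norm_nonneg _), norm_sub_sq_real, norm_sub_sq_real, norm_smul,
    norm_smul, real_inner_smul_right, real_inner_smul_right, real_inner_comm, hxy]

theorem poissonKernel_circleMap_nonneg (hz : z ∈ ball 0 1) (t : ℝ) :
    0 ≤ poissonKernel 0 z (circleMap 0 1 t) := by
  have hz' : ‖z‖ ≤ 1 := (mem_ball_zero_iff.1 hz).le
  rw [poissonKernel_def, sub_zero, sub_zero, norm_circleMap_zero, abs_one]
  exact div_nonneg (sub_nonneg.2 (pow_le_pow_left₀ (norm_nonneg z) hz' 2)) (sq_nonneg _)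

theorem circleAverage_poissonKernel (hz : z ∈ ball 0 1) :
    Real.circleAverage (poissonKernel 0 z) 0 1 = 1 := by
  have h : Real.circleAverage (poissonKernel 0 z • (1 : ℂ → ℝ)) 0 1 = 1 :=
    (InnerProductSpace.harmonicOnNhd_const 1).circleAverage_poissonKernel_smul hz
  rwa [smul_eq_mul, mul_one] at h

theorem lintegral_poissonDensity (hz : z ∈ ball 0 1) :
    ∫⁻ t in Ioc 0 (2 * π), poissonDensity z t = 1 := by
  have hint : ∫ t in (0)..2 * π, (2 * π)⁻¹ * poissonKernel 0 z (circleMap 0 1 t) = 1 := by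
    rw [intervalIntegral.integral_const_mul, ← smul_eq_mul, ← Real.circleAverage_def,
      circleAverage_poissonKernel hz]
  have hintegrable := intervalIntegral.intervalIntegrable_of_integral_ne_zero
    (hint.trans_ne one_ne_zero)
  rw [intervalIntegral.integral_of_le Real.two_pi_pos.le] at hint
  unfold poissonDensity
  rw [← ofReal_integral_eq_lintegral_ofReal hintegrable.1 (.of_forall fun t ↦ ?_), hint,
    ENNReal.ofReal_one]
  have hP := poissonKernel_circleMap_nonneg hz t
  positivity

theorem poissonDensity_circleMap_comm (r θ t : ℝ) :
    poissonDensity (circleMap 0 r θ) t = poissonDensity (circleMap 0 r t) θ := by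
  have hsmul (s : ℝ) : circleMap 0 r s = r • circleMap 0 1 s := by
    rw [circleMap_zero, circleMap_zero_one, real_smul]
  have hnorm : ‖circleMap 0 1 t - circleMap 0 r θ‖ = ‖circleMap 0 1 θ - circleMap 0 r t‖ := by
    rw [hsmul, hsmul, norm_sub_smul_comm_of_norm_eq]
    rw [norm_circleMap_zero, norm_circleMap_zero]
  simp only [poissonDensity, poissonKernel_def, sub_zero, norm_circleMap_zero, hnorm]

theorem enorm_poissonInt_le_lintegral (G : ℂ → ℂ) (hz : z ∈ ball 0 1) :
    ‖poissonInt G z‖ₑ ≤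
      ∫⁻ t in Ioc 0 (2 * π), poissonDensity z t * ‖G (circleMap 0 1 t)‖ₑ := by
  rw [poissonInt_eq_circleAverage, Real.circleAverage_def, ← intervalIntegral.integral_smul,
    intervalIntegral.integral_of_le Real.two_pi_pos.le]
  refine (enorm_integral_le_lintegral_enorm _).trans_eq (lintegral_congr fun t ↦ ?_)
  have hP := poissonKernel_circleMap_nonneg hz t
  rw [smul_smul, enorm_smul, Real.enorm_of_nonneg (by positivity), poissonDensity]

theorem enorm_poissonInt_le_eLpNorm_top
    (hG : AEStronglyMeasurable (G ∘ circleMap 0 1) (volume.restrict (Ioc 0 (2 * π))))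
    (hz : z ∈ ball 0 1) :
    ‖poissonInt G z‖ₑ ≤ eLpNorm (G ∘ circleMap 0 1) ⊤ (volume.restrict (Ioc 0 (2 * π))) :=
  (enorm_poissonInt_le_lintegral G hz).trans <| lintegral_mul_enorm_le_eLpNorm_top
    (measurable_poissonDensity measurable_const measurable_id).aemeasurable
    (lintegral_poissonDensity hz).le hG

theorem eLpNorm_poissonInt_circleMap_le {r : ℝ} (hp : 1 ≤ p)
    (hG : AEStronglyMeasurable (G ∘ circleMap 0 1) (volume.restrict (Ioc 0 (2 * π))))
    (hr : |r| < 1) :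
    eLpNorm (poissonInt G ∘ circleMap 0 r) p (volume.restrict (Ioc 0 (2 * π))) ≤
      eLpNorm (G ∘ circleMap 0 1) p (volume.restrict (Ioc 0 (2 * π))) := by
  have hmem := circleMap_zero_mem_ball_of_abs_lt_one hr
  refine eLpNorm_le_eLpNorm_of_enorm_le_lintegral_kernel
    (K := fun θ t ↦ poissonDensity (circleMap 0 r θ) t) hp ?_
    (fun θ ↦ (lintegral_poissonDensity (hmem θ)).le) (fun t ↦ ?_) hG
    fun θ ↦ enorm_poissonInt_le_lintegral G (hmem θ)
  · exact measurable_poissonDensity ((measurable_circleMap 0 r).comp measurable_fst) measurable_snd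
  · simp only [poissonDensity_circleMap_comm r _ t]
    exact (lintegral_poissonDensity (hmem t)).le

end PoissonDensity

theorem Mp_toReal_le_toReal_eLpNorm {p : ℝ≥0∞} {g : ℂ → ℂ} {r : ℝ} (hp0 : p ≠ 0) (hpt : p ≠ ⊤)
    (hg : AEStronglyMeasurable (g ∘ circleMap 0 r) (volume.restrict (Ioc 0 (2 * π)))) :
    Mp p.toReal g r ≤
      (eLpNorm (g ∘ circleMap 0 r) p (volume.restrict (Ioc 0 (2 * π)))).toReal := by
  have hint : 0 ≤ ∫ θ in (0)..2 * π, ‖g (r * exp (θ * I))‖ ^ p.toReal :=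
    intervalIntegral.integral_nonneg Real.two_pi_pos.le fun θ _ ↦ by positivity
  have hpi : 1 / (2 * π) ≤ 1 := by
    rw [div_le_one Real.two_pi_pos]
    linarith [Real.pi_gt_three]
  rw [toReal_eLpNorm hg, lpNorm_eq_integral_norm_rpow_toReal hp0 hpt hg, Mp, one_div p.toReal]
  gcongr
  simp only [Function.comp_apply, circleMap_zero]
  rw [← intervalIntegral.integral_of_le Real.two_pi_pos.le]
  exact mul_le_of_le_one_left hint hpi

section HardySpace

variable {g : ℂ → ℂ} {p C : ℝ≥0∞}

theorem aestronglyMeasurable_comp_circleMap_of_harmonicOnD (hg : HarmonicOnD g) {r : ℝ}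
    (hr : |r| < 1) (μ : Measure ℝ) : AEStronglyMeasurable (g ∘ circleMap 0 r) μ :=
  (hg.1.continuousOn.comp_continuous (continuous_circleMap 0 r)
    (circleMap_zero_mem_ball_of_abs_lt_one hr)).aestronglyMeasurable

theorem memhp_of_forall_eLpNorm_le (hg : HarmonicOnD g) (hp0 : p ≠ 0) (hpt : p ≠ ⊤) (hC : C ≠ ⊤)
    (h : ∀ r ∈ Ioo (0 : ℝ) 1,
      eLpNorm (g ∘ circleMap 0 r) p (volume.restrict (Ioc 0 (2 * π))) ≤ C) :
    Memhp p.toReal g := by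
  refine ⟨hg, C.toReal, fun r hr ↦ ?_⟩
  have hr1 : |r| < 1 := (abs_of_pos hr.1).trans_lt hr.2
  exact (Mp_toReal_le_toReal_eLpNorm hp0 hpt
    (aestronglyMeasurable_comp_circleMap_of_harmonicOnD hg hr1 _)).trans
    (ENNReal.toReal_mono hC (h r hr))

theorem memhinf_of_forall_enorm_le (hg : HarmonicOnD g) (hC : C ≠ ⊤)
    (h : ∀ z ∈ ball (0 : ℂ) 1, ‖g z‖ₑ ≤ C) : Memhinf g :=
  ⟨hg, C.toReal, fun z hz ↦ (toReal_enorm (g z)).symm.trans_le (ENNReal.toReal_mono hC (h z hz))⟩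

end HardySpace

/-- For `p ∈ [1,∞]`, `F : 𝕋 → ℂ` absolutely continuous with
`Ḟ ∈ L^p(𝕋)` and `f = P[F]`: the angular derivative satisfies `f_θ = P[Ḟ]` on `𝔻`;
in particular `f_θ ∈ h^p(𝔻)` and `‖f_θ‖_p ≤ ‖Ḟ‖_{L^p(𝕋)}` (the latter expressed by
comparing the `L^p` norms on each circle of radius `r < 1` with the boundary norm). -/
theorem stmt10 (p : ℝ≥0∞) (hp : 1 ≤ p) (F : ℂ → ℂ) (Fd : ℝ → ℂ)
    (hF : IsACDeriv F Fd) (hLp : MemLpT p Fd) :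
    (∀ z ∈ ball (0:ℂ) 1, fTheta (poissonInt F) z = poissonIntR Fd z) ∧
    ((p ≠ ⊤ → Memhp p.toReal (fTheta (poissonInt F))) ∧
      (p = ⊤ → Memhinf (fTheta (poissonInt F)))) ∧
    (∀ r ∈ Ioo (0:ℝ) 1,
      eLpNorm (fun θ : ℝ => fTheta (poissonInt F) ((r : ℂ) * Complex.exp ((θ : ℂ) * Complex.I)))
          p (volume.restrict (Ioc (0:ℝ) (2 * π)))
        ≤ eLpNorm Fd p (volume.restrict (Ioc (0:ℝ) (2 * π)))) := by
  obtain ⟨G, rfl⟩ := hF.exists_eq_comp_circleMap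
  have hθ : EqOn (fTheta (poissonInt F)) (poissonInt G) (ball 0 1) := fun z hz ↦
    fTheta_poissonInt hF hz
  have hharm : HarmonicOnD (fTheta (poissonInt F)) := harmonicOnD_of_harmonicOnNhd <|
    harmonicOnNhd_of_eqOn isOpen_ball (harmonicOnNhd_poissonInt (hF.1 0 (2 * π))) hθ
  have hnorm : ∀ r ∈ Ioo (0 : ℝ) 1,
      eLpNorm (fTheta (poissonInt F) ∘ circleMap 0 r) p (volume.restrict (Ioc 0 (2 * π))) ≤
        eLpNorm (G ∘ circleMap 0 1) p (volume.restrict (Ioc 0 (2 * π))) := by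
    intro r hr
    have hr1 : |r| < 1 := (abs_of_pos hr.1).trans_lt hr.2
    have hcomp : fTheta (poissonInt F) ∘ circleMap 0 r = poissonInt G ∘ circleMap 0 r :=
      funext fun θ ↦ hθ (circleMap_zero_mem_ball_of_abs_lt_one hr1 θ)
    rw [hcomp]
    exact eLpNorm_poissonInt_circleMap_le hp hLp.1 hr1
  refine ⟨fun z hz ↦ (hθ hz).trans (poissonIntR_comp_circleMap G z).symm,
    ⟨fun hpt ↦ memhp_of_forall_eLpNorm_le hharm (one_pos.trans_le hp).ne' hpt hLp.2.ne hnorm, ?_⟩,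
    fun r hr ↦ by simpa only [Function.comp_def, circleMap_zero] using hnorm r hr⟩
  rintro rfl
  refine memhinf_of_forall_enorm_le hharm hLp.2.ne fun z hz ↦ ?_
  rw [hθ hz]
  exact enorm_poissonInt_le_eLpNorm_top hLp.1 hz

end
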